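/- (Main Theorem, Statement (C).) Let k ≥ 1, R > 0, and x ∈ E with ‖x‖ ≠ R. Then for every β ∈ ℂ, the set { α ∈ ℂ : ∫_{y ∈ S^k(R)} ω(x,y)^α dμH[k](y) = ∫_{y ∈ S^k(R)} ω(x,y)^β dμH[k](y) } is infinite. -/

import Mathlib

open MeasureTheory

/-!
The integral of `ω(x, ·) ^ α` is the moment generating function `F` of the bounded function
`log ω(x, ·)`, evaluated at `α`: an entire function of exponential type. If `F` took the value `c`
only finitely often, Hadamard's factorization would give `F z = P z * exp (a * z + b) + c` with a
polynomial `P`, and on the half-line of the real axis where `Re (a * z) ≤ 0` this grows at most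
polynomially. But `F` grows exponentially on both half-lines, because `log ω(x, ·)` takes both
signs: `ω > 1` at the point of the sphere nearest to `x` and `ω < 1` at the farthest one, and every
point of the sphere charges the Hausdorff measure. Only the centre `x = 0` is exceptional; there
`ω` is constantly `1`.
-/

section EntireFunctions

open Asymptotics Filter Polynomial Topology

theorem exists_eq_polynomial_mul_of_finite_zeros {𝕜 : Type*} [NontriviallyNormedField 𝕜]
    {f : 𝕜 → 𝕜} (hf : AnalyticOnNhd 𝕜 f Set.univ) (hfin : {z | f z = 0}.Finite) :
    ∃ (P : 𝕜[X]) (g : 𝕜 → 𝕜), P ≠ 0 ∧ AnalyticOnNhd 𝕜 g Set.univ ∧ (∀ z, g z ≠ 0) ∧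
      ∀ z, f z = P.eval z * g z := by
  set D := MeromorphicOn.divisor f Set.univ
  have horder (z : 𝕜) : meromorphicOrderAt f z ≠ ⊤ :=
    (meromorphicOrderAt_ne_top_iff_eventually_ne_zero (hf z trivial).meromorphicAt).2
      (nhdsNE_le_cofinite z hfin.compl_mem_cofinite)
  have hD0 (z : 𝕜) : 0 ≤ D z := MeromorphicOn.AnalyticOnNhd.divisor_nonneg hf z
  have hD : D.support.Finite := by
    refine hfin.subset fun z hz => by_contra fun hfz => hz ?_
    rw [MeromorphicOn.AnalyticOnNhd.divisor_apply hf trivial,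
      (hf z trivial).analyticOrderAt_eq_zero.2 hfz]
    rfl
  obtain ⟨g, hg, hg0, hfg⟩ := hf.meromorphicOn.extract_zeros_poles (fun z => horder z) hD
  let P : 𝕜[X] := ∏ u ∈ hD.toFinset, (X - C u) ^ (D u).toNat
  have hP : (∏ᶠ u, (· - u) ^ D u) = fun z => P.eval z := by
    rw [Function.FactorizedRational.finprod_eq_fun hD]
    funext z
    rw [finprod_eq_prod_of_mulSupport_subset (s := hD.toFinset), eval_prod]
    · refine Finset.prod_congr rfl fun u _ => ?_
      rw [eval_pow, eval_sub, eval_X, eval_C, ← zpow_natCast, Int.toNat_of_nonneg (hD0 u)]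
    · intro u hu
      contrapose! hu
      have huD : D u = 0 := by simpa using hu
      simp [huD]
  refine ⟨P, g, Finset.prod_ne_zero_iff.2 fun u _ => pow_ne_zero _ (X_sub_C_ne_zero u), hg,
    fun z => hg0 ⟨z, trivial⟩, fun z => ?_⟩
  have hpunctured : f =ᶠ[𝓝[≠] z] fun w => P.eval w * g w := by
    rw [hP] at hfg
    have hmem := mem_codiscrete.1 hfg z
    rwa [disjoint_principal_right, compl_compl] at hmem
  exact (((hf z trivial).continuousAt.eventuallyEq_nhds_iff_eventuallyEq_nhdsNE
    (P.continuous.continuousAt.mul (hg z trivial).continuousAt)).1 hpunctured).eq_of_nhds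

theorem one_isBigO_eval {𝕜 : Type*} [NormedField 𝕜] [ProperSpace 𝕜] {P : 𝕜[X]} (hP : P ≠ 0) :
    (fun _ => 1 : 𝕜 → 𝕜) =O[cocompact 𝕜] fun z => P.eval z := by
  rcases le_or_gt P.degree 0 with hdeg | hdeg
  · rw [eq_C_of_degree_le_zero hdeg] at hP ⊢
    simp only [eval_C]
    exact isBigO_const_const _ (by simpa only [ne_eq, C_eq_zero] using hP) _
  · exact ((isLittleO_const_left (c := (1 : 𝕜))).2 <| Or.inr <|
      P.tendsto_norm_atTop hdeg tendsto_norm_cocompact_atTop).isBigO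

theorem eval_isLittleO_exp (P : ℂ[X]) {ε : ℝ} (hε : 0 < ε) :
    (fun t : ℝ => P.eval (t : ℂ)) =o[atTop] fun t => Real.exp (ε * t) := by
  simp_rw [eval_eq_sum_range]
  refine IsLittleO.fun_sum fun i _ => ?_
  have hpow : (fun t : ℝ => (t : ℂ) ^ i) =o[atTop] fun t => Real.exp (ε * t) := by
    exact_mod_cast Complex.isLittleO_ofReal_left.2 (isLittleO_pow_exp_pos_mul_atTop i hε)
  exact hpow.const_mul_left _

variable {f : ℂ → ℂ}

theorem exists_exp_eq_of_forall_ne_zero (hf : Differentiable ℂ f) (hf0 : ∀ z, f z ≠ 0) :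
    ∃ h : ℂ → ℂ, Differentiable ℂ h ∧ ∀ z, f z = Complex.exp (h z) := by
  obtain ⟨h, hh0, hh⟩ := (hf.deriv.div hf hf0).isExactOn_univ.with_val_at 0 (Complex.log (f 0))
  have hderiv (z : ℂ) : HasDerivAt (fun z => f z * Complex.exp (-h z)) 0 z := by
    convert! (hf z).hasDerivAt.mul (hh z trivial).fun_neg.cexp using 1
    simp only [Pi.div_apply]
    field_simp [hf0 z]
    ring
  have hconst (z : ℂ) : f z * Complex.exp (-h z) = 1 := by
    rw [is_const_of_deriv_eq_zero (fun z => (hderiv z).differentiableAt)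
      (fun z => (hderiv z).deriv) z 0, hh0, Complex.exp_neg, Complex.exp_log (hf0 0),
      mul_inv_cancel₀ (hf0 0)]
  refine ⟨h, fun z => (hh z trivial).differentiableAt, fun z => ?_⟩
  rw [← mul_one (Complex.exp (h z)), ← hconst z, mul_left_comm, ← Complex.exp_add, add_neg_cancel,
    Complex.exp_zero, mul_one]

theorem eq_affine_of_norm_sub_le {F : Type*} [NormedAddCommGroup F] [NormedSpace ℂ F]
    [CompleteSpace F] {h : ℂ → F} (hh : Differentiable ℂ h) {K : ℝ}
    (hK : ∀ z, ‖h z - h 0‖ ≤ K * ‖z‖) (z : ℂ) : h z = z • deriv h 0 + h 0 := by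
  have hdiff : Differentiable ℂ (dslope h 0) := by
    rw [← differentiableOn_univ, Complex.differentiableOn_dslope univ_mem]
    exact hh.differentiableOn
  have hbdd : Bornology.IsBounded (Set.range (dslope h 0)) := by
    refine isBounded_iff_forall_norm_le.2 ⟨max K ‖deriv h 0‖, ?_⟩
    rintro _ ⟨w, rfl⟩
    rcases eq_or_ne w 0 with rfl | hw
    · rw [dslope_same]
      exact le_max_right _ _
    · rw [dslope_of_ne _ hw, slope_def_module, sub_zero, norm_smul, norm_inv]
      exact ((inv_mul_le_iff₀' (norm_pos_iff.2 hw)).2 (hK w)).trans (le_max_left _ _)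
  have hslope : z • dslope h 0 z = h z - h 0 := by simpa only [sub_zero] using sub_smul_dslope h 0 z
  rw [← dslope_same h, ← hdiff.apply_eq_apply_of_bounded hbdd z 0, hslope, sub_add_cancel]

theorem norm_sub_le_of_re_le {h : ℂ → ℂ} (hh : Differentiable ℂ h) {A M : ℝ}
    (hre : ∀ z, (h z).re ≤ A + M * ‖z‖) (z : ℂ) :
    ‖h z - h 0‖ ≤ 4 * (|A| + ‖h 0‖ + |M| + 1) * ‖z‖ := by
  set B := |A| + ‖h 0‖ + |M| + 1 with hB
  set R := 2 * ‖z‖ + 1 with hR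
  have hz := norm_nonneg z
  have hmaps : Set.MapsTo (fun w => h w - h 0) (Metric.ball 0 R) {w | w.re ≤ B * R} := by
    intro w hw
    have hwR : ‖w‖ ≤ R := (mem_ball_zero_iff.1 hw).le
    have hMw : M * ‖w‖ ≤ |M| * R :=
      mul_le_mul (le_abs_self M) hwR (norm_nonneg w) (abs_nonneg M)
    calc (h w - h 0).re ≤ A + M * ‖w‖ - (h 0).re := by
          rw [Complex.sub_re]; linarith [hre w]
      _ ≤ |A| + |M| * R + ‖h 0‖ := by
          linarith [le_abs_self A, neg_abs_le (h 0).re, Complex.abs_re_le_norm (h 0)]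
      _ ≤ B * R := by
          nlinarith [hB, hR, mul_nonneg (abs_nonneg A) hz, mul_nonneg (norm_nonneg (h 0)) hz]
  calc ‖h z - h 0‖ ≤ 2 * (B * R) * ‖z‖ / (R - ‖z‖) :=
        Complex.borelCaratheodory_zero (by positivity) (by fun_prop) hmaps (by positivity)
          (mem_ball_zero_iff.2 (by linarith)) (sub_self _)
    _ ≤ 4 * B * ‖z‖ := by
      rw [div_le_iff₀ (by linarith)]
      nlinarith [show 0 ≤ B * ‖z‖ by positivity]

theorem bddAbove_range_of_eventually_le_cocompact {X : Type*} [TopologicalSpace X] {u : X → ℝ}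
    (hu : Continuous u) {C : ℝ} (h : ∀ᶠ x in cocompact X, u x ≤ C) : BddAbove (Set.range u) := by
  obtain ⟨K, hK, hKC⟩ := mem_cocompact.1 h
  obtain ⟨D, hD⟩ := hK.bddAbove_image hu.continuousOn
  refine ⟨max C D, ?_⟩
  rintro _ ⟨x, rfl⟩
  by_cases hx : x ∈ K
  · exact (hD (Set.mem_image_of_mem u hx)).trans (le_max_right _ _)
  · exact (hKC hx).trans (le_max_left _ _)

theorem exists_affine_of_exp_isBigO {h : ℂ → ℂ} (hh : Differentiable ℂ h) {M : ℝ}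
    (hO : (fun z => Complex.exp (h z)) =O[cocompact ℂ] fun z => Real.exp (M * ‖z‖)) :
    ∃ a b : ℂ, ∀ z, h z = a * z + b := by
  obtain ⟨C, hC, hhC⟩ := hO.exists_pos
  have hre : ∀ᶠ z in cocompact ℂ, (h z).re - M * ‖z‖ ≤ Real.log C := by
    filter_upwards [hhC.bound] with z hz
    rw [Complex.norm_exp, Real.norm_eq_abs, Real.abs_exp, ← Real.exp_log hC, ← Real.exp_add,
      Real.exp_le_exp] at hz
    exact sub_le_iff_le_add.2 hz
  obtain ⟨A, hA⟩ := bddAbove_range_of_eventually_le_cocompact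
    ((Complex.continuous_re.comp hh.continuous).sub (continuous_const.mul continuous_norm)) hre
  refine ⟨deriv h 0, h 0, fun z => ?_⟩
  rw [mul_comm]
  exact eq_affine_of_norm_sub_le hh
    (norm_sub_le_of_re_le hh fun z => sub_le_iff_le_add.1 (hA ⟨z, rfl⟩)) z

theorem exists_eq_polynomial_mul_exp {M : ℝ} (hf : Differentiable ℂ f)
    (hO : f =O[cocompact ℂ] fun z => Real.exp (M * ‖z‖)) (hfin : {z | f z = 0}.Finite) :
    ∃ (P : ℂ[X]) (a b : ℂ), ∀ z, f z = P.eval z * Complex.exp (a * z + b) := by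
  obtain ⟨P, g, hP, hg, hg0, hfg⟩ := exists_eq_polynomial_mul_of_finite_zeros
    (Complex.analyticOnNhd_univ_iff_differentiable.2 hf) hfin
  obtain ⟨h, hh, hgh⟩ :=
    exists_exp_eq_of_forall_ne_zero (Complex.analyticOnNhd_univ_iff_differentiable.1 hg) hg0
  have hexp : (fun z => Complex.exp (h z)) =O[cocompact ℂ] f := by
    refine ((one_isBigO_eval hP).mul (isBigO_refl (fun z => Complex.exp (h z)) _)).congr
      (fun z => one_mul _) fun z => ?_
    rw [hfg, hgh]
  obtain ⟨a, b, hab⟩ := exists_affine_of_exp_isBigO hh (hexp.trans hO)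
  exact ⟨P, a, b, fun z => by rw [hfg, hgh, hab]⟩

theorem polynomial_mul_exp_add_const_isLittleO_exp (P : ℂ[X]) {a : ℂ} (ha : a.re ≤ 0)
    (b c : ℂ) {ε : ℝ} (hε : 0 < ε) :
    (fun t : ℝ => P.eval (t : ℂ) * Complex.exp (a * t + b) + c) =o[atTop]
      fun t => Real.exp (ε * t) := by
  have hexp : (fun t : ℝ => Complex.exp (a * t + b)) =O[atTop] fun _ => (1 : ℝ) := by
    refine IsBigO.of_bound (Real.exp b.re) ?_
    filter_upwards [eventually_ge_atTop 0] with t ht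
    have hat : a.re * t ≤ 0 := mul_nonpos_of_nonpos_of_nonneg ha ht
    simpa [Complex.norm_exp] using hat
  have hconst : (fun _ : ℝ => c) =o[atTop] fun t => Real.exp (ε * t) := by
    simpa only [eval_C] using eval_isLittleO_exp (C c) hε
  have hmul := (eval_isLittleO_exp P hε).mul_isBigO hexp
  simp only [mul_one] at hmul
  exact hmul.add hconst

theorem infinite_setOf_eq_of_exp_growth {M ε δ : ℝ} (hf : Differentiable ℂ f)
    (hO : f =O[cocompact ℂ] fun z => Real.exp (M * ‖z‖)) (hε : 0 < ε) (hδ : 0 < δ)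
    (hpos : (fun t : ℝ => Real.exp (ε * t)) =O[atTop] fun t => f t)
    (hneg : (fun t : ℝ => Real.exp (δ * t)) =O[atTop] fun t => f (-t)) (c : ℂ) :
    {z | f z = c}.Infinite := by
  intro hfin
  have hconst : (fun _ => c) =O[cocompact ℂ] fun z => Real.exp (|M| * ‖z‖) :=
    (isBigO_const_const c (one_ne_zero' ℝ) _).trans <| IsBigO.of_norm_le fun z => by
      rw [norm_one]
      exact Real.one_le_exp (by positivity)
  have hmono : (fun z : ℂ => Real.exp (M * ‖z‖)) =O[cocompact ℂ] fun z => Real.exp (|M| * ‖z‖) :=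
    IsBigO.of_norm_le fun z => by
      rw [Real.norm_eq_abs, Real.abs_exp]
      gcongr
      exact le_abs_self M
  have hO' : (fun z => f z - c) =O[cocompact ℂ] fun z => Real.exp (|M| * ‖z‖) :=
    (hO.trans hmono).sub hconst
  obtain ⟨P, a, b, hfP⟩ := exists_eq_polynomial_mul_exp (hf.sub_const c) hO'
    (by simpa only [sub_eq_zero] using hfin)
  replace hfP (z : ℂ) : f z = P.eval z * Complex.exp (a * z + b) + c :=
    sub_eq_iff_eq_add.1 (hfP z)
  simp only [hfP] at hpos hneg
  have hne (ε : ℝ) : ∃ᶠ t in atTop, Real.exp (ε * t) ≠ 0 :=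
    .of_forall fun t => Real.exp_ne_zero _
  rcases le_total a.re 0 with ha | ha
  · exact isLittleO_irrefl (hne ε)
      (hpos.trans_isLittleO (polynomial_mul_exp_add_const_isLittleO_exp P ha b c hε))
  · have hreflect := polynomial_mul_exp_add_const_isLittleO_exp (P.comp (-X)) (a := -a)
      (by simpa only [Complex.neg_re, neg_nonpos] using ha) b c hδ
    simp only [eval_comp, eval_neg, eval_X, neg_mul_comm] at hreflect
    exact isLittleO_irrefl (hne δ) (hneg.trans_isLittleO hreflect)

end EntireFunctions

section ComplexMGF

open Asymptotics Filter ProbabilityTheory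

variable {Ω : Type*} [MeasurableSpace Ω] {μ : Measure Ω} {X : Ω → ℝ}

theorem exists_pos_measure_le_ne_zero (h : μ {ω | 0 < X ω} ≠ 0) : ∃ δ > 0, μ {ω | δ ≤ X ω} ≠ 0 := by
  contrapose! h
  refine measure_mono_null (fun ω (hω : 0 < X ω) => ?_) <|
    measure_iUnion_null fun n : ℕ => h (1 / ((n : ℝ) + 1)) Nat.one_div_pos_of_nat
  obtain ⟨n, hn⟩ := exists_nat_one_div_lt hω
  exact Set.mem_iUnion.2 ⟨n, hn.le⟩

theorem exists_exp_isBigO_mgf [IsFiniteMeasure μ]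
    (hint : ∀ t, Integrable (fun ω => Real.exp (t * X ω)) μ) (h : μ {ω | 0 < X ω} ≠ 0) :
    ∃ δ > 0, (fun t => Real.exp (δ * t)) =O[atTop] fun t => mgf X μ t := by
  obtain ⟨δ, hδ, hμδ⟩ := exists_pos_measure_le_ne_zero h
  have hc : 0 < μ.real {ω | δ ≤ X ω} := ENNReal.toReal_pos hμδ (measure_ne_top _ _)
  refine ⟨δ, hδ, .of_bound (μ.real {ω | δ ≤ X ω})⁻¹ ?_⟩
  filter_upwards [eventually_ge_atTop 0] with t ht
  have hchernoff := measure_ge_le_exp_mul_mgf δ ht (hint t)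
  rw [neg_mul, Real.exp_neg, inv_mul_eq_div, le_div_iff₀ (Real.exp_pos _), mul_comm t] at hchernoff
  rw [Real.norm_of_nonneg (Real.exp_nonneg _), Real.norm_of_nonneg mgf_nonneg, inv_mul_eq_div,
    le_div_iff₀' hc]
  exact hchernoff

theorem differentiable_complexMGF (hint : ∀ t, Integrable (fun ω => Real.exp (t * X ω)) μ) :
    Differentiable ℂ (complexMGF X μ) := fun z => by
  have huniv : integrableExpSet X μ = Set.univ := Set.eq_univ_of_forall hint
  refine (hasDerivAt_complexMGF ?_).differentiableAt
  rw [huniv, interior_univ]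
  trivial

theorem norm_complexMGF_le_of_abs_le [IsFiniteMeasure μ] {L : ℝ} (hL : ∀ᵐ ω ∂μ, |X ω| ≤ L)
    (z : ℂ) : ‖complexMGF X μ z‖ ≤ μ.real Set.univ * Real.exp (L * ‖z‖) := by
  have hbound : ∀ᵐ ω ∂μ, ‖Complex.exp (z * X ω)‖ ≤ Real.exp (L * ‖z‖) := by
    filter_upwards [hL] with ω hω
    rw [Complex.norm_exp, Real.exp_le_exp]
    calc (z * X ω).re ≤ ‖z * X ω‖ := Complex.re_le_norm _
      _ = |X ω| * ‖z‖ := by rw [norm_mul, Complex.norm_real, Real.norm_eq_abs, mul_comm]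
      _ ≤ L * ‖z‖ := by gcongr
  rw [mul_comm]
  exact norm_integral_le_of_norm_le_const hbound

theorem infinite_setOf_complexMGF_eq [IsFiniteMeasure μ] (hX : AEMeasurable X μ) {L : ℝ}
    (hL : ∀ᵐ ω ∂μ, |X ω| ≤ L) (hpos : μ {ω | 0 < X ω} ≠ 0) (hneg : μ {ω | X ω < 0} ≠ 0) (c : ℂ) :
    {z | complexMGF X μ z = c}.Infinite := by
  have hint (t : ℝ) : Integrable (fun ω => Real.exp (t * X ω)) μ :=
    integrable_exp_mul_of_mem_Icc hX (hL.mono fun _ => abs_le.1)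
  obtain ⟨ε, hε, hXε⟩ := exists_exp_isBigO_mgf hint hpos
  obtain ⟨δ, hδ, hXδ⟩ := exists_exp_isBigO_mgf (X := -X) (μ := μ)
    (fun t => by simpa only [Pi.neg_apply, mul_neg, neg_mul] using hint (-t))
    (by simpa only [Pi.neg_apply, Left.neg_pos_iff] using hneg)
  refine infinite_setOf_eq_of_exp_growth (M := L) (differentiable_complexMGF hint)
    (.of_bound (μ.real Set.univ) <| .of_forall fun z => ?_) hε hδ ?_ ?_ c
  · rw [Real.norm_of_nonneg (Real.exp_nonneg _)]
    exact norm_complexMGF_le_of_abs_le hL z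
  · simpa only [complexMGF_ofReal, Complex.isBigO_ofReal_right] using hXε
  · simpa only [← Complex.ofReal_neg, complexMGF_ofReal, Complex.isBigO_ofReal_right, mgf_neg]
      using hXδ

end ComplexMGF

section SphereGraph

open Filter Metric Module Submodule Topology
open scoped RealInnerProductSpace

variable {E : Type*} [NormedAddCommGroup E] [InnerProductSpace ℝ E] {p y : E} {v : (ℝ ∙ p)ᗮ}

/-- The hemisphere of radius `‖p‖` with pole `p`, as a graph over the hyperplane orthogonal to `p`.
For `‖p‖ < ‖v‖` the square root takes the junk value `0`. -/
noncomputable def sphereGraph (p : E) (v : (ℝ ∙ p)ᗮ) : E :=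
  v + √(1 - ‖v‖ ^ 2 / ‖p‖ ^ 2) • p

theorem sphereGraph_zero (p : E) : sphereGraph p 0 = p := by
  simp [sphereGraph]

theorem norm_sphereGraph (hp : p ≠ 0) (hv : ‖v‖ ≤ ‖p‖) : ‖sphereGraph p v‖ = ‖p‖ := by
  have hpn : 0 < ‖p‖ := norm_pos_iff.2 hp
  have hdiv : ‖v‖ ^ 2 / ‖p‖ ^ 2 ≤ 1 := by
    rw [div_le_one (pow_pos hpn 2)]
    gcongr
  have horth : ⟪(v : E), √(1 - ‖v‖ ^ 2 / ‖p‖ ^ 2) • p⟫ = 0 := by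
    rw [inner_smul_right, mem_orthogonal_singleton_iff_inner_left.1 v.2, mul_zero]
  rw [← sq_eq_sq₀ (norm_nonneg _) (norm_nonneg _), sphereGraph, norm_add_sq_real, horth, norm_smul,
    mul_pow, Real.norm_eq_abs, sq_abs, Real.sq_sqrt (sub_nonneg.2 hdiv), Submodule.norm_coe]
  field_simp
  ring

theorem orthogonalProjectionOnto_sphereGraph (v : (ℝ ∙ p)ᗮ) :
    (ℝ ∙ p)ᗮ.orthogonalProjectionOnto (sphereGraph p v) = v := by
  rw [sphereGraph, map_add, map_smul, orthogonalProjectionOnto_mem_subspace_eq_self,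
    orthogonalProjectionOnto_orthogonalComplement_singleton_eq_zero, smul_zero, add_zero]

theorem sphereGraph_orthogonalProjectionOnto (hp : p ≠ 0) (hy : ‖y‖ = ‖p‖) (hpy : 0 ≤ ⟪p, y⟫) :
    sphereGraph p ((ℝ ∙ p)ᗮ.orthogonalProjectionOnto y) = y := by
  have hP : ‖p‖ ^ 2 ≠ 0 := pow_ne_zero 2 (norm_ne_zero_iff.2 hp)
  have hproj : (ℝ ∙ p).starProjection y = (⟪p, y⟫ / ‖p‖ ^ 2) • p := starProjection_singleton ℝ y
  have hsq : ‖p‖ ^ 2 = (⟪p, y⟫ / ‖p‖ ^ 2) ^ 2 * ‖p‖ ^ 2 +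
      ‖(ℝ ∙ p)ᗮ.orthogonalProjectionOnto y‖ ^ 2 := by
    have hsplit := (ℝ ∙ p).norm_sq_eq_add_norm_sq_starProjection y
    rwa [hy, hproj, norm_smul, mul_pow, Real.norm_eq_abs, sq_abs, starProjection_apply,
      Submodule.norm_coe] at hsplit
  have hheight : 1 - ‖(ℝ ∙ p)ᗮ.orthogonalProjectionOnto y‖ ^ 2 / ‖p‖ ^ 2 =
      (⟪p, y⟫ / ‖p‖ ^ 2) ^ 2 := by
    rw [one_sub_div hP, div_eq_iff hP]
    linarith
  rw [sphereGraph, hheight, Real.sqrt_sq (by positivity), ← hproj, add_comm]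
  exact (ℝ ∙ p).starProjection_add_starProjection_orthogonal y

theorem contDiffAt_sphereGraph (p : E) : ContDiffAt ℝ 1 (sphereGraph p) 0 := by
  have hcoe : ContDiffAt ℝ 1 (fun v : (ℝ ∙ p)ᗮ => (v : E)) 0 :=
    (ℝ ∙ p)ᗮ.subtypeL.contDiff.contDiffAt
  have hnorm : ContDiffAt ℝ 1 (fun v : (ℝ ∙ p)ᗮ => 1 - ‖v‖ ^ 2 / ‖p‖ ^ 2) 0 :=
    contDiffAt_const.sub ((contDiff_norm_sq ℝ).contDiffAt.div_const _)
  exact hcoe.add ((hnorm.sqrt (by simp)).smul contDiffAt_const)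

variable [MeasurableSpace E] [BorelSpace E] {k : ℕ} [Fact (finrank ℝ E = k + 1)]

theorem isAddHaarMeasure_hausdorffMeasure_orthogonal (hp : p ≠ 0) :
    (μH[k] : Measure (ℝ ∙ p)ᗮ).IsAddHaarMeasure := by
  have : FiniteDimensional ℝ E := .of_fact_finrank_eq_succ k
  have hrank : finrank ℝ (ℝ ∙ p)ᗮ = k := finrank_orthogonal_span_singleton hp
  rw [← hrank]
  infer_instance

theorem hausdorffMeasure_finiteAtFilter_nhdsWithin_sphere (hp : p ≠ 0) :
    (μH[k] : Measure E).FiniteAtFilter (𝓝[sphere 0 ‖p‖] p) := by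
  have : FiniteDimensional ℝ E := .of_fact_finrank_eq_succ k
  have : (μH[k] : Measure (ℝ ∙ p)ᗮ).IsAddHaarMeasure :=
    isAddHaarMeasure_hausdorffMeasure_orthogonal hp
  obtain ⟨K, s, hs, hK⟩ := (contDiffAt_sphereGraph p).exists_lipschitzOnWith
  obtain ⟨t, ht, hμt⟩ := (μH[k] : Measure (ℝ ∙ p)ᗮ).finiteAt_nhds 0
  refine ⟨sphereGraph p '' (s ∩ t), ?_, ?_⟩
  · have hproj : Tendsto (ℝ ∙ p)ᗮ.orthogonalProjectionOnto (𝓝 p) (𝓝 0) := by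
      refine ((ℝ ∙ p)ᗮ.orthogonalProjectionOnto.continuous.tendsto' _ _ ?_)
      exact orthogonalProjectionOnto_orthogonalComplement_singleton_eq_zero p
    have hinner : ∀ᶠ y in 𝓝 p, 0 < ⟪p, y⟫ :=
      (continuousAt_const.inner continuousAt_id).eventually_const_lt (real_inner_self_pos.2 hp)
    filter_upwards [nhdsWithin_le_nhds (hproj.eventually (inter_mem hs ht)),
      nhdsWithin_le_nhds hinner, self_mem_nhdsWithin] with y hst hpy hy
    exact ⟨_, hst, sphereGraph_orthogonalProjectionOnto hp (mem_sphere_zero_iff_norm.1 hy) hpy.le⟩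
  · calc μH[k] (sphereGraph p '' (s ∩ t)) ≤ K ^ (k : ℝ) * μH[k] (s ∩ t) :=
          (hK.mono Set.inter_subset_left).hausdorffMeasure_image_le k.cast_nonneg
      _ < ⊤ := ENNReal.mul_lt_top (by finiteness) <|
        (measure_mono Set.inter_subset_right).trans_lt hμt

theorem hausdorffMeasure_sphere_lt_top {R : ℝ} (hR : 0 < R) : μH[k] (sphere (0 : E) R) < ⊤ := by
  have : FiniteDimensional ℝ E := .of_fact_finrank_eq_succ k
  refine (isCompact_sphere 0 R).measure_lt_top_of_nhdsWithin fun p hp => ?_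
  rw [← mem_sphere_zero_iff_norm.1 hp]
  exact hausdorffMeasure_finiteAtFilter_nhdsWithin_sphere (ne_zero_of_mem_sphere hR.ne' ⟨p, hp⟩)

theorem sphere_subset_support_restrict_hausdorffMeasure {R : ℝ} (hR : 0 < R) :
    sphere (0 : E) R ⊆ ((μH[k] : Measure E).restrict (sphere 0 R)).support := by
  have : FiniteDimensional ℝ E := .of_fact_finrank_eq_succ k
  intro p hpR
  have hp : p ≠ 0 := ne_zero_of_mem_sphere hR.ne' ⟨p, hpR⟩
  have hpn : ‖p‖ = R := mem_sphere_zero_iff_norm.1 hpR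
  have : (μH[k] : Measure (ℝ ∙ p)ᗮ).IsAddHaarMeasure :=
    isAddHaarMeasure_hausdorffMeasure_orthogonal hp
  rw [Measure.mem_support_iff_forall]
  intro U hU
  have hgraph : ∀ᶠ v in 𝓝 (0 : (ℝ ∙ p)ᗮ), sphereGraph p v ∈ U ∩ sphere 0 R := by
    have hcont := (contDiffAt_sphereGraph p).continuousAt
    rw [ContinuousAt, sphereGraph_zero] at hcont
    filter_upwards [hcont hU, closedBall_mem_nhds 0 (norm_pos_iff.2 hp)] with v hvU hv
    refine ⟨hvU, ?_⟩
    rw [mem_sphere_zero_iff_norm, norm_sphereGraph hp (mem_closedBall_zero_iff.1 hv), hpn]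
  calc 0 < μH[k] {v : (ℝ ∙ p)ᗮ | sphereGraph p v ∈ U ∩ sphere 0 R} :=
        Measure.measure_pos_of_mem_nhds _ hgraph
    _ ≤ μH[k] ((ℝ ∙ p)ᗮ.orthogonalProjectionOnto '' (U ∩ sphere 0 R)) :=
        measure_mono fun v hv => ⟨_, hv, orthogonalProjectionOnto_sphereGraph v⟩
    _ ≤ μH[k] (U ∩ sphere 0 R) :=
        hausdorffMeasure_orthogonalProjectionOnto_le _ _ _ k.cast_nonneg
    _ = (μH[k] : Measure E).restrict (sphere 0 R) U :=
        (Measure.restrict_apply' isClosed_sphere.measurableSet).symm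

end SphereGraph

section SecantRatio

open Metric ProbabilityTheory Topology

variable {E : Type*} [NormedAddCommGroup E]

/-- The function `ω(x, y)` of the paper. For `y` on the sphere of radius `R` about the origin and
`x` off it, the line through `x` and `y` meets that sphere a second time, and in the Euclidean case
`ω(x, y)` is the ratio of the distances from `x` to the second point and to `y`.
At `x = y` it takes the junk value `0`. -/
noncomputable def secantRatio (x y : E) : ℝ := |‖x‖ ^ 2 - ‖y‖ ^ 2| / ‖x - y‖ ^ 2

variable {x y : E}

theorem secantRatio_pos (hxy : ‖x‖ ≠ ‖y‖) : 0 < secantRatio x y := by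
  have hne : x ≠ y := fun h => hxy (congrArg norm h)
  have hsq : ‖x‖ ^ 2 - ‖y‖ ^ 2 ≠ 0 :=
    sub_ne_zero.2 (mt (sq_eq_sq₀ (norm_nonneg x) (norm_nonneg y)).1 hxy)
  exact div_pos (abs_pos.2 hsq) (pow_pos (norm_pos_iff.2 (sub_ne_zero.2 hne)) 2)

theorem secantRatio_eq (x y : E) :
    secantRatio x y = |‖x‖ - ‖y‖| * (‖x‖ + ‖y‖) / ‖x - y‖ ^ 2 := by
  rw [secantRatio, sq_sub_sq, abs_mul, abs_of_nonneg (show 0 ≤ ‖x‖ + ‖y‖ by positivity), mul_comm]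

theorem abs_log_secantRatio_le (hxy : ‖x‖ ≠ ‖y‖) :
    |Real.log (secantRatio x y)| ≤ Real.log ((‖x‖ + ‖y‖) / |‖x‖ - ‖y‖|) := by
  have hd : 0 < |‖x‖ - ‖y‖| := abs_pos.2 (sub_ne_zero.2 hxy)
  have hdn : |‖x‖ - ‖y‖| ≤ ‖x - y‖ := abs_norm_sub_norm_le x y
  have hns : ‖x - y‖ ≤ ‖x‖ + ‖y‖ := norm_sub_le x y
  have hn : 0 < ‖x - y‖ := hd.trans_le hdn
  have hs : 0 < ‖x‖ + ‖y‖ := hn.trans_le hns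
  rw [abs_le, ← Real.log_inv, inv_div]
  constructor
  · refine Real.log_le_log (by positivity) ?_
    rw [secantRatio_eq, div_le_div_iff₀ hs (by positivity), mul_assoc]
    gcongr
    rw [← sq]
    gcongr
  · refine Real.log_le_log (secantRatio_pos hxy) ?_
    rw [secantRatio_eq, div_le_div_iff₀ (by positivity) hd, mul_right_comm, mul_comm]
    gcongr
    rw [← sq]
    gcongr

theorem continuousAt_log_secantRatio (hxy : ‖x‖ ≠ ‖y‖) :
    ContinuousAt (fun y => Real.log (secantRatio x y)) y := by
  refine ContinuousAt.log ?_ (secantRatio_pos hxy).ne'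
  exact ContinuousAt.div (by fun_prop) (by fun_prop)
    (pow_ne_zero 2 (norm_ne_zero_iff.2 (sub_ne_zero.2 (ne_of_apply_ne norm hxy))))

theorem measurable_secantRatio [MeasurableSpace E] [OpensMeasurableSpace E] (x : E) :
    Measurable (secantRatio x) := by
  have hsub : Measurable fun y => ‖x - y‖ := (continuous_const.sub continuous_id).norm.measurable
  unfold secantRatio
  fun_prop

theorem setIntegral_secantRatio_cpow [MeasurableSpace E] [OpensMeasurableSpace E]
    (μ : Measure E) {R : ℝ} (hx : ‖x‖ ≠ R) (α : ℂ) :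
    ∫ y in sphere 0 R, ((secantRatio x y : ℝ) : ℂ) ^ α ∂μ =
      complexMGF (fun y => Real.log (secantRatio x y)) (μ.restrict (sphere 0 R)) α := by
  refine setIntegral_congr_fun isClosed_sphere.measurableSet fun y hy => ?_
  have hpos : 0 < secantRatio x y := secantRatio_pos (by rwa [mem_sphere_zero_iff_norm.1 hy])
  simp only [Complex.cpow_def_of_ne_zero (Complex.ofReal_ne_zero.2 hpos.ne'),
    ← Complex.ofReal_log hpos.le, mul_comm]

theorem secantRatio_zero_left (hy : y ≠ 0) : secantRatio 0 y = 1 := by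
  rw [secantRatio, norm_zero, zero_sub, norm_neg, zero_pow two_ne_zero, zero_sub, abs_neg,
    abs_of_nonneg (sq_nonneg _), div_self (pow_ne_zero 2 (norm_ne_zero_iff.2 hy))]

theorem abs_norm_sub_norm_lt_norm_add_norm (hx : x ≠ 0) (hy : y ≠ 0) :
    |‖x‖ - ‖y‖| < ‖x‖ + ‖y‖ := by
  have hx := norm_pos_iff.2 hx
  have hy := norm_pos_iff.2 hy
  rw [abs_lt]
  constructor <;> linarith

variable [NormedSpace ℝ E]

theorem one_lt_secantRatio_of_sameRay (hray : SameRay ℝ x y) (hx : x ≠ 0) (hy : y ≠ 0)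
    (hxy : ‖x‖ ≠ ‖y‖) : 1 < secantRatio x y := by
  have hd : 0 < |‖x‖ - ‖y‖| := abs_pos.2 (sub_ne_zero.2 hxy)
  rw [secantRatio_eq, hray.norm_sub, sq, mul_div_mul_left _ _ hd.ne', one_lt_div hd]
  exact abs_norm_sub_norm_lt_norm_add_norm hx hy

theorem secantRatio_neg_lt_one_of_sameRay (hray : SameRay ℝ x y) (hx : x ≠ 0) (hy : y ≠ 0) :
    secantRatio x (-y) < 1 := by
  have hlt := abs_norm_sub_norm_lt_norm_add_norm hx hy
  have hs : 0 < ‖x‖ + ‖y‖ := (abs_nonneg _).trans_lt hlt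
  rwa [secantRatio_eq, norm_neg, sub_neg_eq_add, hray.norm_add, sq, mul_div_mul_right _ _ hs.ne',
    div_lt_one hs]

theorem infinite_setOf_complexMGF_log_secantRatio_eq [MeasurableSpace E] [OpensMeasurableSpace E]
    {μ : Measure E} {R : ℝ} (hR : 0 < R) (hμ : μ (sphere 0 R) ≠ ⊤)
    (hsupp : sphere 0 R ⊆ (μ.restrict (sphere 0 R)).support) (hx : ‖x‖ ≠ R) (hx0 : x ≠ 0) (c : ℂ) :
    {α | complexMGF (fun y => Real.log (secantRatio x y)) (μ.restrict (sphere 0 R)) α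
      = c}.Infinite := by
  have : IsFiniteMeasure (μ.restrict (sphere 0 R)) := isFiniteMeasure_restrict.2 hμ
  have hsphere {y : E} (hy : y ∈ sphere 0 R) : ‖x‖ ≠ ‖y‖ := by
    rwa [mem_sphere_zero_iff_norm.1 hy]
  have hnhds {y : E} (hy : y ∈ sphere 0 R) {s : Set ℝ} (hs : s ∈ 𝓝 (Real.log (secantRatio x y))) :
      μ.restrict (sphere 0 R) {y | Real.log (secantRatio x y) ∈ s} ≠ 0 :=
    ((Measure.mem_support_iff_forall y).1 (hsupp hy) _
      (continuousAt_log_secantRatio (hsphere hy) hs)).ne'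
  set p := (R / ‖x‖) • x with hp
  have hpn : ‖p‖ = R := by
    rw [hp, norm_smul, norm_div, norm_norm, Real.norm_of_nonneg hR.le,
      div_mul_cancel₀ _ (norm_ne_zero_iff.2 hx0)]
  have hpR : p ∈ sphere 0 R := mem_sphere_zero_iff_norm.2 hpn
  have hnpR : -p ∈ sphere 0 R := mem_sphere_zero_iff_norm.2 ((norm_neg p).trans hpn)
  have hp0 : p ≠ 0 := ne_zero_of_mem_sphere hR.ne' ⟨p, hpR⟩
  have hray : SameRay ℝ x p := SameRay.sameRay_nonneg_smul_right x (by positivity)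
  refine infinite_setOf_complexMGF_eq
    (measurable_secantRatio x).log.aemeasurable (L := Real.log ((‖x‖ + R) / |‖x‖ - R|)) ?_
    (hnhds hpR (Ioi_mem_nhds (Real.log_pos ?_))) (hnhds hnpR (Iio_mem_nhds (Real.log_neg ?_ ?_))) c
  · filter_upwards [ae_restrict_mem isClosed_sphere.measurableSet] with y hy
    simpa only [mem_sphere_zero_iff_norm.1 hy] using abs_log_secantRatio_le (hsphere hy)
  · exact one_lt_secantRatio_of_sameRay hray hx0 hp0 (hsphere hpR)
  · exact secantRatio_pos (hsphere hnpR)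
  · exact secantRatio_neg_lt_one_of_sameRay hray hx0 hp0

theorem main_theorem_statement_C_general [MeasurableSpace E] [OpensMeasurableSpace E]
    {μ : Measure E} {R : ℝ} (hR : 0 < R) (hμ : μ (sphere 0 R) ≠ ⊤)
    (hsupp : sphere 0 R ⊆ (μ.restrict (sphere 0 R)).support) (hx : ‖x‖ ≠ R) (β : ℂ) :
    {α : ℂ | ∫ y in sphere 0 R, ((secantRatio x y : ℝ) : ℂ) ^ α ∂μ =
      ∫ y in sphere 0 R, ((secantRatio x y : ℝ) : ℂ) ^ β ∂μ}.Infinite := by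
  rcases eq_or_ne x 0 with rfl | hx0
  · have hone (α : ℂ) : ∫ y in sphere (0 : E) R, ((secantRatio 0 y : ℝ) : ℂ) ^ α ∂μ =
        ∫ _ in sphere (0 : E) R, 1 ∂μ :=
      setIntegral_congr_fun isClosed_sphere.measurableSet fun y hy => by
        simp only [secantRatio_zero_left (ne_zero_of_mem_sphere hR.ne' ⟨y, hy⟩),
          Complex.ofReal_one, Complex.one_cpow]
    simpa only [hone, Set.ofPred_true] using Set.infinite_univ
  · simp only [setIntegral_secantRatio_cpow μ hx]
    exact infinite_setOf_complexMGF_log_secantRatio_eq hR hμ hsupp hx hx0 _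

end SecantRatio

/-- Main Theorem, Statement (C): for every `β ∈ ℂ` there are infinitely many `α ∈ ℂ` with
`∫_{S^k(R)} ω^α dμH[k] = ∫_{S^k(R)} ω^β dμH[k]`. -/
theorem main_theorem_statement_C
    (k : ℕ) (hk : 1 ≤ k) (R : ℝ) (hR : 0 < R)
    (x : EuclideanSpace ℝ (Fin (k + 1))) (hx : ‖x‖ ≠ R) (β : ℂ) :
    {α : ℂ |
        ∫ y in Metric.sphere (0 : EuclideanSpace ℝ (Fin (k + 1))) R,
          ((|‖x‖ ^ 2 - ‖y‖ ^ 2| / ‖x - y‖ ^ 2 : ℝ) : ℂ) ^ α ∂μH[k]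
        = ∫ y in Metric.sphere (0 : EuclideanSpace ℝ (Fin (k + 1))) R,
          ((|‖x‖ ^ 2 - ‖y‖ ^ 2| / ‖x - y‖ ^ 2 : ℝ) : ℂ) ^ β ∂μH[k]}.Infinite := by
  have : Fact (Module.finrank ℝ (EuclideanSpace ℝ (Fin (k + 1))) = k + 1) :=
    ⟨finrank_euclideanSpace_fin⟩
  exact main_theorem_statement_C_general hR (hausdorffMeasure_sphere_lt_top hR).ne
    (sphere_subset_support_restrict_hausdorffMeasure hR) hx β
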